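/- For all integers m, n ≥ 2, the complete bipartite graph K_{m,n} satisfies car(K_{m,n}) = 3. -/

import Mathlib

open SimpleGraph

/-- A set `S` is cycle convex in `G` if no vertex `w` outside `S` is such that the
subgraph induced by `S ∪ {w}` contains a cycle through `w`. -/
def IsCycleConvex {V : Type*} (G : SimpleGraph V) (S : Set V) : Prop :=
  ∀ w : V, w ∉ S →
    ¬ ∃ c : (G.induce (S ∪ {w})).Walk ⟨w, Set.mem_union_right S rfl⟩
        ⟨w, Set.mem_union_right S rfl⟩, c.IsCycle

/-- The cycle convex hull of `S`: the smallest cycle convex set containing `S`. -/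
def cycleHull {V : Type*} (G : SimpleGraph V) (S : Set V) : Set V :=
  ⋂₀ {T : Set V | S ⊆ T ∧ IsCycleConvex G T}

/-- `S` is Carathéodory independent in the cycle convexity of `G`. -/
def CIndep {V : Type*} (G : SimpleGraph V) (S : Set V) : Prop :=
  ∃ p ∈ cycleHull G S, ∀ a ∈ S, p ∉ cycleHull G (S \ {a})

/-- The Carathéodory number of `G` in the cycle convexity. -/
noncomputable def carNumber {V : Type*} (G : SimpleGraph V) : ℕ :=
  sSup {n : ℕ | ∃ S : Set V, CIndep G S ∧ S.ncard = n}

/-!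
A set is cycle convex exactly when any two distinct vertices of one component of its induced
subgraph have all their common neighbours in the set. In `K_{α,β}` with both parts nontrivial this
leaves only three kinds of convex sets: the independent sets, the sets with at most two vertices,
and the whole vertex set. Hence any three vertices spanning an edge have the whole vertex set as
hull, so no Carathéodory independent set can properly contain them; and a Carathéodory independent
set without edges is convex, which forces it to be a subsingleton. Conversely, in a triangle-free
graph the sets with at most two vertices are convex, so every three-element set that is not convex
is Carathéodory independent.
-/

section Cycle

variable {V : Type*} {G : SimpleGraph V}

theorem exists_isCycle_iff_exists_walk_notMem_support {v : V} :
    (∃ c : G.Walk v v, c.IsCycle) ↔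
      ∃ y z, y ≠ z ∧ G.Adj v y ∧ G.Adj v z ∧ ∃ p : G.Walk y z, v ∉ p.support := by
  classical
  constructor
  · rintro ⟨_ | ⟨hy, p⟩, hc⟩
    · exact absurd hc Walk.not_isCycle_nil
    · have hp : p.IsPath := ((Walk.cons_isCycle_iff p hy).1 hc).1
      have hnil : ¬ p.Nil := Walk.not_nil_of_isCycle_cons hc
      refine ⟨_, p.penultimate, ?_, hy, (p.adj_penultimate hnil).symm, p.dropLast, ?_⟩
      · simpa [Walk.penultimate_cons_of_not_nil _ _ hnil] using hc.snd_ne_penultimate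
      · have hnodup := hp.support_nodup
        rw [← Walk.support_dropLast_concat hnil] at hnodup
        exact fun hv => List.disjoint_of_nodup_append hnodup hv (List.mem_singleton_self v)
  · rintro ⟨y, z, hyz, hy, hz, p, hv⟩
    have hv' : v ∉ p.bypass.support := fun h => hv (p.support_bypass_subset_support h)
    refine ⟨.cons hy (p.bypass.concat hz.symm), (Walk.cons_isCycle_iff _ _).2 ⟨?_, fun h => ?_⟩⟩
    · exact p.bypass_isPath.concat hv' hz.symm
    · rw [Walk.edges_concat, List.concat_eq_append, List.mem_append, List.mem_singleton] at h
      rcases h with h | h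
      · exact hv' (p.bypass.fst_mem_support_of_mem_edges h)
      · rw [Sym2.eq_swap, Sym2.congr_left] at h
        exact hyz h

end Cycle

section Convexity

variable {V : Type*} {G : SimpleGraph V} {S T : Set V}

theorem isCycleConvex_iff_commonNeighbors_subset :
    IsCycleConvex G S ↔
      ∀ y z : S, (G.induce S).Reachable y z → y ≠ z → G.commonNeighbors y z ⊆ S := by
  simp only [IsCycleConvex, exists_isCycle_iff_exists_walk_notMem_support]
  constructor
  · rintro hS y z ⟨p⟩ hyz w ⟨hyw, hzw⟩
    by_contra hw
    let f := G.induceHomOfLE (Set.subset_union_left (s := S) (t := {w}))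
    refine hS w hw ⟨f y, f z, f.injective.ne hyz, hyw.symm, hzw.symm, p.map f.toHom, ?_⟩
    rw [Walk.support_map, List.mem_map]
    rintro ⟨x, -, hx⟩
    have hxw : (x : V) = w := congrArg Subtype.val hx
    exact hw (hxw ▸ x.2)
  · rintro hS w hw ⟨y, z, hyz, hwy, hwz, p, hp⟩
    let q := p.map (Embedding.induce (S ∪ {w})).toHom
    have hq : ∀ x ∈ q.support, x ∈ S := by
      intro x hx
      obtain ⟨x, hxp, rfl⟩ := List.mem_map.1 (Walk.support_map _ p ▸ hx)
      refine x.2.resolve_right fun hxw => ?_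
      obtain rfl : x = ⟨w, Set.mem_union_right S rfl⟩ := Subtype.ext hxw
      exact hp hxp
    have hyz' : (y : V) ≠ z := Subtype.coe_ne_coe.2 hyz
    exact hw (hS _ _ ⟨q.induce S hq⟩ (Subtype.coe_ne_coe.1 hyz') ⟨hwy.symm, hwz.symm⟩)

theorem IsCycleConvex.mem_of_adj (hS : IsCycleConvex G S) {w x y z : V} (hx : x ∈ S) (hy : y ∈ S)
    (hz : z ∈ S) (hyz : y ≠ z) (hwy : G.Adj w y) (hwz : G.Adj w z) (hxy : G.Adj x y)
    (hxz : G.Adj x z) : w ∈ S := by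
  have hyx : (G.induce S).Adj ⟨y, hy⟩ ⟨x, hx⟩ := hxy.symm
  have hxz' : (G.induce S).Adj ⟨x, hx⟩ ⟨z, hz⟩ := hxz
  exact isCycleConvex_iff_commonNeighbors_subset.1 hS ⟨y, hy⟩ ⟨z, hz⟩
    (hyx.reachable.trans hxz'.reachable) (by simpa using hyz) ⟨hwy.symm, hwz.symm⟩

theorem isCycleConvex_univ : IsCycleConvex G Set.univ :=
  fun w hw => absurd (Set.mem_univ w) hw

theorem isCycleConvex_of_isIndepSet (hS : G.IsIndepSet S) : IsCycleConvex G S := by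
  have hbot : G.induce S = ⊥ :=
    eq_bot_iff.2 fun x y hxy => hS x.2 y.2 (Subtype.coe_ne_coe.2 hxy.ne) hxy
  refine isCycleConvex_iff_commonNeighbors_subset.2 fun y z hyz hne => ?_
  rw [hbot, reachable_bot] at hyz
  exact absurd hyz hne

theorem isCycleConvex_of_encard_le_two (hG : G.CliqueFree 3) (hS : S.encard ≤ 2) :
    IsCycleConvex G S := by
  classical
  refine isCycleConvex_iff_commonNeighbors_subset.2 fun y z hyz hne w hw => ?_
  have hnadj : ¬ G.Adj y z := fun h =>
    hG {(y : V), (z : V), w} (is3Clique_triple_iff.2 ⟨h, hw.1, hw.2⟩)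
  have hpair : ({(y : V), (z : V)} : Set V) = S := by
    rw [← Set.encard_pair (Subtype.coe_ne_coe.2 hne)] at hS
    exact (Set.toFinite _).eq_of_subset_of_encard_le (Set.pair_subset y.2 z.2) hS
  have hindep : G.IsIndepSet S := by
    rw [← hpair]
    exact Set.pairwise_pair.2 fun _ => ⟨hnadj, mt Adj.symm hnadj⟩
  exact isCycleConvex_iff_commonNeighbors_subset.1 (isCycleConvex_of_isIndepSet hindep)
    y z hyz hne hw

theorem subset_cycleHull : S ⊆ cycleHull G S :=
  Set.subset_sInter fun _ hT => hT.1

theorem cycleHull_subset (hST : S ⊆ T) (hT : IsCycleConvex G T) : cycleHull G S ⊆ T :=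
  Set.sInter_subset_of_mem ⟨hST, hT⟩

theorem isCycleConvex_cycleHull : IsCycleConvex G (cycleHull G S) := by
  refine isCycleConvex_iff_commonNeighbors_subset.2 fun y z hyz hne w hw T hT => ?_
  have hle : cycleHull G S ⊆ T := cycleHull_subset hT.1 hT.2
  exact isCycleConvex_iff_commonNeighbors_subset.1 hT.2 _ _
    (hyz.map (G.induceHomOfLE hle).toHom) ((G.induceHomOfLE hle).injective.ne hne) hw

theorem cycleHull_eq_self_iff : cycleHull G S = S ↔ IsCycleConvex G S :=
  ⟨fun h => h ▸ isCycleConvex_cycleHull,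
    fun h => (cycleHull_subset subset_rfl h).antisymm subset_cycleHull⟩

theorem cycleHull_mono (hST : S ⊆ T) : cycleHull G S ⊆ cycleHull G T :=
  cycleHull_subset (hST.trans subset_cycleHull) isCycleConvex_cycleHull

end Convexity

section Caratheodory

variable {V : Type*} {G : SimpleGraph V} {S T : Set V}

theorem CIndep.not_cycleHull_subset_of_ssubset (hS : CIndep G S) (hTS : T ⊂ S) :
    ¬ cycleHull G S ⊆ cycleHull G T := by
  obtain ⟨p, hp, hpS⟩ := hS
  obtain ⟨a, haS, haT⟩ := Set.exists_of_ssubset hTS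
  exact fun h => hpS a haS (cycleHull_mono (Set.subset_sdiff_singleton hTS.subset haT) (h hp))

theorem CIndep.subsingleton_of_isCycleConvex (hS : CIndep G S) (hconv : IsCycleConvex G S) :
    S.Subsingleton := by
  obtain ⟨p, hp, hpS⟩ := hS
  rw [cycleHull_eq_self_iff.2 hconv] at hp
  have eq_p : ∀ a ∈ S, a = p := by
    by_contra! ⟨a, ha, hap⟩
    exact hpS a ha (subset_cycleHull ⟨hp, hap.symm⟩)
  exact fun a ha b hb => (eq_p a ha).trans (eq_p b hb).symm

theorem cIndep_of_not_isCycleConvex (hG : G.CliqueFree 3) (hcard : S.encard ≤ 3)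
    (hS : ¬ IsCycleConvex G S) : CIndep G S := by
  obtain ⟨p, hp, hpS⟩ : ∃ p ∈ cycleHull G S, p ∉ S := by
    by_contra! h
    exact hS (cycleHull_eq_self_iff.1 (Set.Subset.antisymm h subset_cycleHull))
  refine ⟨p, hp, fun a ha hpa => ?_⟩
  have hle : (S \ {a}).encard ≤ 2 := by
    rw [Set.encard_sdiff_singleton_of_mem ha]
    exact tsub_le_iff_right.2 hcard
  rw [cycleHull_eq_self_iff.2 (isCycleConvex_of_encard_le_two hG hle)] at hpa
  exact hpS hpa.1

end Caratheodory

section CompleteBipartite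

variable {α β : Type*} {S : Set (α ⊕ β)}

theorem completeBipartiteGraph_cliqueFree_three : (completeBipartiteGraph α β).CliqueFree 3 :=
  (CompleteBipartiteGraph.bicoloring α β).colorable.cliqueFree (by simp)

theorem isIndepSet_completeBipartiteGraph_iff :
    (completeBipartiteGraph α β).IsIndepSet S ↔ ∀ l r, .inl l ∈ S → .inr r ∉ S := by
  constructor
  · exact fun h l r hl hr => h hl hr Sum.inl_ne_inr (by simp)
  · rintro h (x | x) hx (y | y) hy -
    · simp
    · exact absurd hy (h x y hx)
    · exact absurd hx (h y x hy)
    · simp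

theorem IsCycleConvex.mem_of_completeBipartiteGraph_adj
    (hS : IsCycleConvex (completeBipartiteGraph α β) S) {l : α} {r : β} (hl : .inl l ∈ S)
    (hr : .inr r ∈ S) {w y z : α ⊕ β} (hy : y ∈ S) (hz : z ∈ S) (hyz : y ≠ z)
    (hwy : (completeBipartiteGraph α β).Adj w y) (hwz : (completeBipartiteGraph α β).Adj w z) :
    w ∈ S := by
  cases w with
  | inl a => exact hS.mem_of_adj hl hy hz hyz hwy hwz (by simpa using hwy) (by simpa using hwz)
  | inr b => exact hS.mem_of_adj hr hy hz hyz hwy hwz (by simpa using hwy) (by simpa using hwz)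

theorem IsCycleConvex.eq_univ_of_not_isIndepSet_completeBipartiteGraph [Nontrivial α] [Nontrivial β]
    (hS : IsCycleConvex (completeBipartiteGraph α β) S)
    (hindep : ¬ (completeBipartiteGraph α β).IsIndepSet S) (hcard : 2 < S.encard) :
    S = Set.univ := by
  rw [isIndepSet_completeBipartiteGraph_iff] at hindep
  push Not at hindep
  obtain ⟨l, r, hl, hr⟩ := hindep
  obtain ⟨c, hc, hclr⟩ : ∃ c ∈ S, c ∉ ({.inl l, .inr r} : Set (α ⊕ β)) := by
    rw [← Set.encard_pair (Sum.inl_ne_inr (a := l) (b := r))] at hcard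
    exact Set.not_subset.1 fun h => (Set.encard_le_encard h).not_gt hcard
  have hcl : .inl l ≠ c := fun h => hclr (by simp [h])
  have hcr : .inr r ≠ c := fun h => hclr (by simp [h])
  obtain ⟨l', hl'⟩ := exists_ne l
  obtain ⟨r', hr'⟩ := exists_ne r
  have left_of_right (h : ∀ b, .inr b ∈ S) (a : α) : .inl a ∈ S :=
    hS.mem_of_completeBipartiteGraph_adj hl hr (h r) (h r') (by simpa using hr'.symm)
      (by simp) (by simp)
  have right_of_left (h : ∀ a, .inl a ∈ S) (b : β) : .inr b ∈ S :=
    hS.mem_of_completeBipartiteGraph_adj hl hr (h l) (h l') (by simpa using hl'.symm)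
      (by simp) (by simp)
  rw [Set.eq_univ_iff_forall, Sum.forall]
  cases c with
  | inl c =>
    have hright (b : β) : .inr b ∈ S :=
      hS.mem_of_completeBipartiteGraph_adj hl hr hl hc hcl (by simp) (by simp)
    exact ⟨left_of_right hright, hright⟩
  | inr c =>
    have hleft (a : α) : .inl a ∈ S :=
      hS.mem_of_completeBipartiteGraph_adj hl hr hr hc hcr (by simp) (by simp)
    exact ⟨hleft, right_of_left hleft⟩

theorem isCycleConvex_completeBipartiteGraph_iff [Nontrivial α] [Nontrivial β] :
    IsCycleConvex (completeBipartiteGraph α β) S ↔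
      (completeBipartiteGraph α β).IsIndepSet S ∨ S.encard ≤ 2 ∨ S = Set.univ := by
  constructor
  · intro hS
    by_contra! ⟨hindep, hcard, huniv⟩
    exact huniv (hS.eq_univ_of_not_isIndepSet_completeBipartiteGraph hindep hcard)
  · rintro (hindep | hcard | rfl)
    · exact isCycleConvex_of_isIndepSet hindep
    · exact isCycleConvex_of_encard_le_two completeBipartiteGraph_cliqueFree_three hcard
    · exact isCycleConvex_univ

theorem cycleHull_completeBipartiteGraph_eq_univ [Nontrivial α] [Nontrivial β]
    (hindep : ¬ (completeBipartiteGraph α β).IsIndepSet S) (hcard : 2 < S.encard) :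
    cycleHull (completeBipartiteGraph α β) S = Set.univ :=
  isCycleConvex_cycleHull.eq_univ_of_not_isIndepSet_completeBipartiteGraph
    (fun h => hindep (h.mono subset_cycleHull))
    (hcard.trans_le (Set.encard_le_encard subset_cycleHull))

theorem CIndep.encard_le_three_of_completeBipartiteGraph [Nontrivial α] [Nontrivial β]
    (hS : CIndep (completeBipartiteGraph α β) S) : S.encard ≤ 3 := by
  by_contra! hcard
  have hconv : ¬ IsCycleConvex (completeBipartiteGraph α β) S := fun h =>
    (Set.encard_le_one_iff_subsingleton.2 (hS.subsingleton_of_isCycleConvex h)).not_gt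
      (lt_trans (by norm_num) hcard)
  obtain ⟨l, r, hl, hr⟩ : ∃ l r, .inl l ∈ S ∧ .inr r ∈ S := by
    by_contra! h
    exact hconv (isCycleConvex_of_isIndepSet (isIndepSet_completeBipartiteGraph_iff.2 h))
  obtain ⟨T, hlrT, hTS, hT⟩ : ∃ T, {.inl l, .inr r} ⊆ T ∧ T ⊆ S ∧ T.encard = 3 :=
    Set.exists_superset_subset_encard_eq (Set.pair_subset hl hr)
      (by rw [Set.encard_pair Sum.inl_ne_inr]; norm_num) hcard.le
  have hspan : cycleHull (completeBipartiteGraph α β) T = Set.univ := by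
    refine cycleHull_completeBipartiteGraph_eq_univ (fun h => ?_) (by rw [hT]; norm_num)
    exact isIndepSet_completeBipartiteGraph_iff.1 h l r (hlrT (by simp)) (hlrT (by simp))
  refine hS.not_cycleHull_subset_of_ssubset (hTS.ssubset_of_ne ?_) (hspan ▸ Set.subset_univ _)
  rintro rfl
  exact hcard.ne' hT

theorem exists_cIndep_completeBipartiteGraph_encard_eq_three (α β : Type*) [Nontrivial α]
    [Nontrivial β] :
    ∃ S, CIndep (completeBipartiteGraph α β) S ∧ S.encard = 3 := by
  obtain ⟨a, b, hab⟩ := exists_pair_ne α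
  obtain ⟨r, s, hrs⟩ := exists_pair_ne β
  let S : Set (α ⊕ β) := {.inl a, .inl b, .inr r}
  have hcard : S.encard = 3 :=
    Set.encard_eq_three.2 ⟨_, _, _, by simpa using hab, by simp, by simp, rfl⟩
  have hconv : ¬ IsCycleConvex (completeBipartiteGraph α β) S := by
    rw [isCycleConvex_completeBipartiteGraph_iff, isIndepSet_completeBipartiteGraph_iff, hcard]
    rintro (hindep | hle | huniv)
    · exact hindep a r (by simp [S]) (by simp [S])
    · exact absurd hle (by norm_num)
    · have hs : Sum.inr s ∈ S := huniv ▸ Set.mem_univ _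
      simp [S, hrs.symm] at hs
  exact ⟨S, cIndep_of_not_isCycleConvex completeBipartiteGraph_cliqueFree_three hcard.le hconv,
    hcard⟩

end CompleteBipartite

theorem stmt_10_general {α β : Type*} [Nontrivial α] [Nontrivial β] :
    carNumber (completeBipartiteGraph α β) = 3 := by
  refine IsGreatest.csSup_eq ⟨?_, ?_⟩
  · obtain ⟨S, hS, hcard⟩ := exists_cIndep_completeBipartiteGraph_encard_eq_three α β
    exact ⟨S, hS, by simp [Set.ncard, hcard]⟩
  · rintro _ ⟨S, hS, rfl⟩
    exact ENat.toNat_le_of_le_natCast hS.encard_le_three_of_completeBipartiteGraph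

/-- The complete bipartite graph with parts of sizes m, n ≥ 2 has Caratheodory
number 3. -/
theorem stmt_10 (m n : ℕ) (hm : 2 ≤ m) (hn : 2 ≤ n) :
    carNumber (completeBipartiteGraph (Fin m) (Fin n)) = 3 := by
  have : Nontrivial (Fin m) := Fin.nontrivial_iff_two_le.2 hm
  have : Nontrivial (Fin n) := Fin.nontrivial_iff_two_le.2 hn
  exact stmt_10_general
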